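/- Let L(b) = (tr b)·I − bᵀ on M₃(ℝ). For w ∈ M₃(ℝ), the equation b + L(b) = w has a solution b ∈ M₃(ℝ) if and only if the symmetric traceless part w⁺ of w is zero; in that case, the set of solutions is exactly { (tr w/9)·I + ½·skew(w) + q : q a symmetric traceless 3×3 matrix }. Moreover, for every w ∈ M₃(ℝ) there is a unique symmetric traceless matrix β such that β + b + L(b) = w admits a solution b, namely β = w⁺. -/

import Mathlib

open Matrix

/-- The space of 3×3 real matrices. -/
abbrev M3 := Matrix (Fin 3) (Fin 3) ℝ

/-- The operator `L(b) = (tr b)·I − bᵀ`. -/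
noncomputable def Lmap (b : M3) : M3 := (Matrix.trace b) • (1 : M3) - bᵀ

/-- The skew-symmetric part `(w − wᵀ)/2` of a matrix. -/
noncomputable def skewPart (w : M3) : M3 := (2⁻¹ : ℝ) • (w - wᵀ)

/-- The symmetric traceless part `w⁺ = (w + wᵀ)/2 − (tr w/3)·I` of a matrix. -/
noncomputable def plusPart (w : M3) : M3 :=
  (2⁻¹ : ℝ) • (w + wᵀ) - (Matrix.trace w / 3) • (1 : M3)

/-! Since `b + L b = (b - bᵀ) + (tr b) • 1`, the operator `1 + L` acts on the scalar, skew and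
symmetric traceless matrices as multiplication by `n`, `2` and `0` respectively. Hence its kernel is
the space of symmetric traceless matrices, its range is the sum of the other two spaces, and
dividing the scalar and skew parts of `w` by `n` and `2` gives a preimage of `w - w⁺`. -/

section SquareMatrices

variable {n K : Type*} [Field K]

/-- The projection `w ↦ w⁰` onto skew-symmetric matrices. It is the zero map in characteristic two,
where `2⁻¹ = 0`. -/
def skewSymmPart (w : Matrix n n K) : Matrix n n K := (2⁻¹ : K) • (w - wᵀ)

variable [Fintype n]

variable (n K) in
/-- The space `V⁺` of symmetric traceless matrices. -/
def symmTraceless : Submodule K (Matrix n n K) where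
  carrier := {q | qᵀ = q ∧ trace q = 0}
  add_mem' := by
    rintro p q ⟨hp, hp_trace⟩ ⟨hq, hq_trace⟩
    exact ⟨by rw [transpose_add, hp, hq], by rw [trace_add, hp_trace, hq_trace, add_zero]⟩
  zero_mem' := ⟨transpose_zero, trace_zero n K⟩
  smul_mem' := by
    rintro c q ⟨hq, hq_trace⟩
    exact ⟨by rw [transpose_smul, hq], by rw [trace_smul, hq_trace, smul_zero]⟩

theorem mem_symmTraceless_iff {q : Matrix n n K} :
    q ∈ symmTraceless n K ↔ qᵀ = q ∧ trace q = 0 := Iff.rfl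

variable [DecidableEq n]

/-- The operator `L b = (tr b) • 1 - bᵀ` on square matrices of any size, as a linear map. -/
def traceSubTranspose : Matrix n n K →ₗ[K] Matrix n n K where
  toFun b := trace b • 1 - bᵀ
  map_add' a b := by rw [trace_add, transpose_add]; module
  map_smul' c b := by rw [trace_smul, transpose_smul, RingHom.id_apply, smul_eq_mul]; module

/-- The projection `w ↦ w⁺` onto `symmTraceless`, as a linear map. The formula presumes
that `2` and the size of the matrices are nonzero in `K`, since otherwise `2⁻¹` or the quotient is a
junk value. -/
def symmTracelessPart : Matrix n n K →ₗ[K] Matrix n n K where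
  toFun w := (2⁻¹ : K) • (w + wᵀ) - (trace w / Fintype.card n) • 1
  map_add' v w := by rw [trace_add, transpose_add, add_div]; module
  map_smul' c w := by
    rw [trace_smul, transpose_smul, RingHom.id_apply, smul_eq_mul, mul_div_assoc]; module

/-- The preimage `n⁻¹ w⁻ + 2⁻¹ w⁰` of `w⁻ + w⁰` under `1 + L`, where `w⁻ = (tr w / n) • 1` is the
scalar part of `w`. -/
def particularSolution (w : Matrix n n K) : Matrix n n K :=
  (trace w / (Fintype.card n : K) ^ 2) • 1 + (2⁻¹ : K) • skewSymmPart w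

theorem traceSubTranspose_apply (b : Matrix n n K) :
    traceSubTranspose b = trace b • 1 - bᵀ := rfl

theorem symmTracelessPart_apply (w : Matrix n n K) :
    symmTracelessPart w = (2⁻¹ : K) • (w + wᵀ) - (trace w / Fintype.card n) • 1 := rfl

theorem trace_add_traceSubTranspose (b : Matrix n n K) :
    trace (b + traceSubTranspose b) = Fintype.card n * trace b := by
  simp only [traceSubTranspose_apply, trace_add, trace_sub, trace_smul, trace_one, trace_transpose,
    smul_eq_mul]
  ring

theorem add_traceSubTranspose_eq_zero_iff (hn : (Fintype.card n : K) ≠ 0) {b : Matrix n n K} :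
    b + traceSubTranspose b = 0 ↔ b ∈ symmTraceless n K := by
  constructor
  · intro hb
    have trace_eq_zero : trace b = 0 := by
      simpa [hb, hn] using trace_add_traceSubTranspose b
    rw [traceSubTranspose_apply, trace_eq_zero, zero_smul, zero_sub, ← sub_eq_add_neg,
      sub_eq_zero] at hb
    exact ⟨hb.symm, trace_eq_zero⟩
  · rintro ⟨symm, trace_eq_zero⟩
    rw [traceSubTranspose_apply, symm, trace_eq_zero, zero_smul, zero_sub, add_neg_cancel]

theorem symmTracelessPart_eq_self {q : Matrix n n K} (h2 : (2 : K) ≠ 0)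
    (hq : q ∈ symmTraceless n K) : symmTracelessPart q = q := by
  rw [symmTracelessPart_apply, hq.1, hq.2, zero_div, zero_smul, sub_zero, ← two_smul K q,
    inv_smul_smul₀ h2]

theorem symmTracelessPart_mem (h2 : (2 : K) ≠ 0) (hn : (Fintype.card n : K) ≠ 0)
    (w : Matrix n n K) : symmTracelessPart w ∈ symmTraceless n K := by
  rw [symmTracelessPart_apply]
  constructor
  · simp only [transpose_sub, transpose_smul, transpose_add, transpose_transpose, transpose_one,
      add_comm]
  · simp only [trace_sub, trace_smul, trace_add, trace_transpose, trace_one, smul_eq_mul]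
    field

theorem symmTracelessPart_add_traceSubTranspose (h2 : (2 : K) ≠ 0)
    (hn : (Fintype.card n : K) ≠ 0) (b : Matrix n n K) :
    symmTracelessPart (b + traceSubTranspose b) = 0 := by
  have symmetrization : (b + traceSubTranspose b) + (b + traceSubTranspose b)ᵀ
      = (2 : K) • trace b • 1 := by
    simp only [traceSubTranspose_apply, transpose_add, transpose_sub, transpose_smul,
      transpose_one, transpose_transpose]
    module
  rw [symmTracelessPart_apply, symmetrization, trace_add_traceSubTranspose, inv_smul_smul₀ h2,
    mul_div_cancel_left₀ _ hn, sub_self]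

theorem trace_particularSolution (hn : (Fintype.card n : K) ≠ 0) (w : Matrix n n K) :
    trace (particularSolution w) = trace w / Fintype.card n := by
  simp only [particularSolution, skewSymmPart, trace_add, trace_smul, trace_sub, trace_transpose,
    trace_one, sub_self, smul_eq_mul]
  field

theorem particularSolution_sub_transpose (h2 : (2 : K) ≠ 0) (w : Matrix n n K) :
    particularSolution w - (particularSolution w)ᵀ = skewSymmPart w := by
  simp only [particularSolution, skewSymmPart, transpose_add, transpose_smul, transpose_sub,
    transpose_one, transpose_transpose]
  match_scalars <;> field

theorem particularSolution_add_traceSubTranspose (h2 : (2 : K) ≠ 0)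
    (hn : (Fintype.card n : K) ≠ 0) (w : Matrix n n K) :
    particularSolution w + traceSubTranspose (particularSolution w) = w - symmTracelessPart w :=
  calc particularSolution w + traceSubTranspose (particularSolution w)
      = (particularSolution w - (particularSolution w)ᵀ)
          + trace (particularSolution w) • 1 := by rw [traceSubTranspose_apply]; abel
    _ = skewSymmPart w + (trace w / Fintype.card n) • 1 := by
      rw [particularSolution_sub_transpose h2, trace_particularSolution hn]
    _ = w - symmTracelessPart w := by
      rw [skewSymmPart, symmTracelessPart_apply]
      match_scalars <;> field

theorem exists_add_traceSubTranspose_eq_iff (h2 : (2 : K) ≠ 0) (hn : (Fintype.card n : K) ≠ 0)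
    {w : Matrix n n K} : (∃ b, b + traceSubTranspose b = w) ↔ symmTracelessPart w = 0 := by
  constructor
  · rintro ⟨b, rfl⟩
    exact symmTracelessPart_add_traceSubTranspose h2 hn b
  · intro hw
    exact ⟨particularSolution w, by
      rw [particularSolution_add_traceSubTranspose h2 hn, hw, sub_zero]⟩

theorem add_traceSubTranspose_eq_sub_symmTracelessPart_iff (h2 : (2 : K) ≠ 0)
    (hn : (Fintype.card n : K) ≠ 0) {w b : Matrix n n K} :
    b + traceSubTranspose b = w - symmTracelessPart w ↔
      ∃ q ∈ symmTraceless n K, b = particularSolution w + q := by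
  have mem_iff : b + traceSubTranspose b = w - symmTracelessPart w ↔
      b - particularSolution w ∈ symmTraceless n K := by
    rw [← add_traceSubTranspose_eq_zero_iff hn, ← particularSolution_add_traceSubTranspose h2 hn,
      map_sub, sub_add_sub_comm, sub_eq_zero]
  rw [mem_iff]
  constructor
  · exact fun hb => ⟨_, hb, (add_sub_cancel _ _).symm⟩
  · rintro ⟨q, hq, rfl⟩
    rwa [add_sub_cancel_left]

theorem mem_symmTraceless_and_exists_add_eq_iff (h2 : (2 : K) ≠ 0)
    (hn : (Fintype.card n : K) ≠ 0) {w β : Matrix n n K} :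
    (β ∈ symmTraceless n K ∧ ∃ b, β + b + traceSubTranspose b = w) ↔
      β = symmTracelessPart w := by
  constructor
  · rintro ⟨hβ, b, rfl⟩
    rw [add_assoc, map_add, symmTracelessPart_eq_self h2 hβ,
      symmTracelessPart_add_traceSubTranspose h2 hn, add_zero]
  · rintro rfl
    refine ⟨symmTracelessPart_mem h2 hn w, particularSolution w, ?_⟩
    rw [add_assoc, particularSolution_add_traceSubTranspose h2 hn, add_sub_cancel]

theorem solvability_of_b_plus_Lb_general (h2 : (2 : K) ≠ 0) (hn : (Fintype.card n : K) ≠ 0)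
    (w : Matrix n n K) :
    ((∃ b, b + traceSubTranspose b = w) ↔ symmTracelessPart w = 0) ∧
    (symmTracelessPart w = 0 →
      ∀ b, b + traceSubTranspose b = w ↔
        ∃ q ∈ symmTraceless n K,
          b = (trace w / (Fintype.card n : K) ^ 2) • 1 + (2⁻¹ : K) • skewSymmPart w + q) ∧
    (∀ β, (β ∈ symmTraceless n K ∧ ∃ b, β + b + traceSubTranspose b = w) ↔
      β = symmTracelessPart w) := by
  refine ⟨exists_add_traceSubTranspose_eq_iff h2 hn, fun hw b => ?_,
    fun β => mem_symmTraceless_and_exists_add_eq_iff h2 hn⟩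
  simpa only [hw, sub_zero, particularSolution] using
    add_traceSubTranspose_eq_sub_symmTracelessPart_iff h2 hn (w := w) (b := b)

end SquareMatrices

theorem Lmap_eq_traceSubTranspose (b : M3) : Lmap b = traceSubTranspose b := rfl

theorem skewPart_eq_skewSymmPart (w : M3) : skewPart w = skewSymmPart w := rfl

theorem plusPart_eq_symmTracelessPart (w : M3) : plusPart w = symmTracelessPart w := by
  simp [plusPart, symmTracelessPart_apply]

theorem solvability_of_b_plus_Lb (w : M3) :
    ((∃ b : M3, b + Lmap b = w) ↔ plusPart w = 0) ∧
    (plusPart w = 0 →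
      (∀ b : M3, b + Lmap b = w ↔
        ∃ q : M3, qᵀ = q ∧ Matrix.trace q = 0 ∧
          b = (Matrix.trace w / 9) • (1 : M3) + (2⁻¹ : ℝ) • skewPart w + q)) ∧
    (∀ β : M3, (βᵀ = β ∧ Matrix.trace β = 0 ∧ ∃ b : M3, β + b + Lmap b = w) ↔
      β = plusPart w) := by
  have card_sq : (Fintype.card (Fin 3) : ℝ) ^ 2 = 9 := by norm_num
  simpa only [Lmap_eq_traceSubTranspose, skewPart_eq_skewSymmPart, plusPart_eq_symmTracelessPart,
    card_sq, mem_symmTraceless_iff, and_assoc] using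
    solvability_of_b_plus_Lb_general two_ne_zero (by norm_num) w
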